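/- (Theorem 3.1, expansion of the chemical potential.) Let d ≥ 1 and let (ρ^{(n)})_{n≥0} be symmetric measurable functions ρ^{(n)} : (ℝ^d)^n → [0,∞) with ρ^{(0)} = 1 which are translation invariant (ρ^{(n)}(x₁+a,…,x_n+a) = ρ^{(n)}(x₁,…,x_n) for all a) and satisfy a Ruelle bound ρ^{(n)} ≤ ξ^n for some ξ > 0; write ρ := ρ^{(1)} (a constant) and assume ρ > 0. Let ρ_T ∈ A₀ be the unique configuration functional with (ρ^{(n)})_{n≥0} = exp∗ ρ_T, and for x ∈ ℝ^d let ω_x ∈ A₀ be the unique functional with D_x ρ_T = ρ · exp∗ ω_x. Define the Janossy densities j_Λ^{(n)}(x₁,…,x_n) := Σ_{k=0}^∞ ((−1)^k/k!) ∫_{Λ^k} ρ^{(n+k)}(x₁,…,x_n,y₁,…,y_k) dy for bounded measurable Λ ⊆ ℝ^d. Let μ ∈ ℝ and assume (Assumption A, n = 1): for every bounded Δ ⊆ ℝ^d, sup_{x ∈ Δ} | j_{B_R}^{(1)}(x)/j_{B_R}^{(0)} − e^{μ} | → 0 as R → ∞, where B_R is the open ball of radius R centered at 0. Assume (Assumption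 B, m = 1): there are M, A, D_ρ > 0 such that for every bounded measurable Λ, every k ≥ 1 and every x ∈ ℝ^d, ∫_{Λ^k} |ρ_T^{(1+k)}(x,y₁,…,y_k)| dy ≤ k! · M · A · D_ρ^k · ρ. Then there exists D₀ > 0, depending only on M and A, such that if D_ρ ≤ D₀ then the series Σ_{k≥1} ((−1)^k/k!) ∫_{(ℝ^d)^k} ω_0^{(k)}(y₁,…,y_k) dy converges absolutely and μ = log ρ + Σ_{k=1}^∞ ((−1)^k/k!) ∫_{(ℝ^d)^k} ω_0^{(k)}(y₁,…,y_k) dy. -/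

import Mathlib

open MeasureTheory Finset

abbrev CF (E : Type) : Type := (n : ℕ) → (Fin n → E) → ℝ

namespace CF

variable {E : Type}

/-- Symmetry of a configuration functional under permutations of the arguments. -/
def IsSymm (F : CF E) : Prop :=
  ∀ (n : ℕ) (σ : Equiv.Perm (Fin n)) (x : Fin n → E), F n (x ∘ σ) = F n x

/-- The subtuple of `x` with indices in `I`, listed in increasing order. -/
noncomputable def sub {n : ℕ} (x : Fin n → E) (I : Finset (Fin n)) : Fin I.card → E :=
  fun i => x (I.orderIsoOfFin rfl i).1

/-- The convolution `Ψ ∗ Φ`. -/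
noncomputable def conv (Ψ Φ : CF E) : CF E :=
  fun n x => ∑ I : Finset (Fin n), Ψ I.card (sub x I) * Φ Iᶜ.card (sub x Iᶜ)

/-- The unit `𝟙`. -/
def unit : CF E := fun n _ => if n = 0 then 1 else 0

/-- Star-powers `Φ^{∗m}`. -/
noncomputable def starPow (Φ : CF E) : ℕ → CF E
  | 0 => unit
  | m + 1 => conv Φ (starPow Φ m)

/-- The star-exponential `exp∗ Φ = 𝟙 + Σ_{m≥1} Φ^{∗m}/m!`; on `A₀` the sum in the
`n`-th component is finite since `(Φ^{∗m})^{(n)} = 0` for `m > n`. -/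
noncomputable def starExp (Φ : CF E) : CF E :=
  fun n x => ∑ m ∈ Finset.range (n + 1), ((m.factorial : ℝ))⁻¹ * starPow Φ m n x

/-- The derivative `D_x`. -/
noncomputable def D (x : E) (Φ : CF E) : CF E := fun n y => Φ (n + 1) (Fin.cons x y)

/-- The second derivative `D_{x₁,x₂} = D_{x₁} ∘ D_{x₂}`. -/
noncomputable def D2 (x₁ x₂ : E) (Φ : CF E) : CF E := D x₁ (D x₂ Φ)

end CF

/-- Euclidean space `ℝ^d`. -/
abbrev Euc (d : ℕ) : Type := EuclideanSpace ℝ (Fin d)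

/-- The product measure on `Λ^n ⊆ (ℝ^d)^n` (Lebesgue measure restricted to `Λ`
in each coordinate). -/
noncomputable def piRestrict (d : ℕ) (Λ : Set (Euc d)) (n : ℕ) :
    MeasureTheory.Measure (Fin n → Euc d) :=
  MeasureTheory.Measure.pi fun _ => MeasureTheory.volume.restrict Λ

/-- Lebesgue measure on `(ℝ^d)^n`. -/
noncomputable def piVol (d : ℕ) (n : ℕ) : MeasureTheory.Measure (Fin n → Euc d) :=
  MeasureTheory.Measure.pi fun _ => MeasureTheory.volume
/-- The Janossy densities
`j_Λ^{(n)}(x) = Σ_k ((−1)^k/k!) ∫_{Λ^k} ρ^{(n+k)}(x,y) dy`. -/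
noncomputable def janossy (d : ℕ) (ρ : CF (Euc d)) (Λ : Set (Euc d)) (n : ℕ)
    (x : Fin n → Euc d) : ℝ :=
  ∑' k : ℕ, (-1 : ℝ) ^ k / k.factorial *
    ∫ y, ρ (n + k) (Fin.append x y) ∂(piRestrict d Λ k)

/-!
Integrating the components of a configuration functional turns convolution into the product of
generating power series, and `exp∗` into the exponential. Since `D_x` is a derivation,
`D_x ρ = D_x ρ_T ∗ ρ = r exp∗ ω ∗ ρ`; integrating over a set `Λ` of finite measure, this reads
`j_Λ⁽¹⁾(x) = r exp (∑ₖ (-1)ᵏ/k! ∫_{Λᵏ} ω⁽ᵏ⁾) j_Λ⁽⁰⁾`.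

To let `Λ` exhaust the space one needs a bound on `∫ |ω⁽ᵏ⁾|` uniform in `Λ`. The number operator `N`
is a derivation as well, so with `W = exp∗ ω - 𝟙` one has `N ω = N W - N ω ∗ W`. If
`∫ |W⁽ᵏ⁾| ≤ k! C δᵏ`, this recursion gives `∫ |ω⁽ᵏ⁾| ≤ k! (δ (1 + 2 C))ᵏ`, hence an absolutely
convergent majorant for `δ (1 + 2 C) < 1`, and dominated convergence applies.
-/

theorem sum_powerset_map {α β M : Type*} [AddCommMonoid M] (f : α ↪ β) (s : Finset α)
    (g : Finset β → M) :
    ∑ J ∈ (s.map f).powerset, g J = ∑ J ∈ s.powerset, g (J.map f) := by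
  classical
  simp only [map_eq_image, powerset_image]
  exact sum_image fun _ _ _ _ h => image_injective f.injective h

namespace CF

variable {E : Type}

/-! ### The convolution algebra -/

theorem apply_comp_cast (ρ : CF E) {m n : ℕ} (h : m = n) (x : Fin n → E) :
    ρ m (x ∘ Fin.cast h) = ρ n x := by
  subst h
  rfl

/-- The set function `I ↦ Φ(x_I)` on subsets of the index set of a configuration `x`; in these
terms `conv` is the subset convolution. -/
noncomputable def evalOn (Φ : CF E) {n : ℕ} (x : Fin n → E) (I : Finset (Fin n)) : ℝ :=
  Φ I.card (sub x I)

theorem conv_apply (Ψ Φ : CF E) (n : ℕ) (x : Fin n → E) :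
    conv Ψ Φ n x = ∑ I : Finset (Fin n), evalOn Ψ x I * evalOn Φ x Iᶜ := rfl

theorem evalOn_map_univ (Φ : CF E) {n k : ℕ} (x : Fin n → E) (f : Fin k ↪o Fin n) :
    evalOn Φ x (univ.map f.toEmbedding) = Φ k (x ∘ f) := by
  have reindex : ∀ T : Finset (Fin n), ∀ h : T.card = k,
      evalOn Φ x T = Φ k (x ∘ T.orderEmbOfFin h) := by
    rintro T rfl
    rfl
  have hcard : (univ.map f.toEmbedding).card = k := by simp
  rw [reindex _ hcard, ← orderEmbOfFin_unique' hcard fun i => mem_map_of_mem _ (mem_univ i)]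

theorem evalOn_map (Φ : CF E) {n k : ℕ} (x : Fin n → E) (f : Fin k ↪o Fin n)
    (K : Finset (Fin k)) : evalOn Φ x (K.map f.toEmbedding) = evalOn Φ (x ∘ f) K := by
  have hK : K.map f.toEmbedding = univ.map ((K.orderEmbOfFin rfl).trans f).toEmbedding := by
    conv_lhs => rw [← map_orderEmbOfFin_univ K rfl, map_map]
    rfl
  rw [hK, evalOn_map_univ]
  rfl

@[simp]
theorem evalOn_univ (Φ : CF E) {n : ℕ} (x : Fin n → E) : evalOn Φ x univ = Φ n x := by
  simpa using evalOn_map_univ Φ x (RelEmbedding.refl _)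

theorem evalOn_empty_of_apply_zero {Φ : CF E} (h₀ : Φ 0 = 0) {n : ℕ} (x : Fin n → E) :
    evalOn Φ x ∅ = 0 :=
  congrFun h₀ _

theorem evalOn_conv (Ψ Φ : CF E) {n : ℕ} (x : Fin n → E) (S : Finset (Fin n)) :
    evalOn (conv Ψ Φ) x S = ∑ J ∈ S.powerset, evalOn Ψ x J * evalOn Φ x (S \ J) := by
  set e : Fin S.card ↪o Fin n := S.orderEmbOfFin rfl
  have hS : univ.map e.toEmbedding = S := map_orderEmbOfFin_univ S rfl
  calc evalOn (conv Ψ Φ) x S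
      = ∑ K : Finset (Fin S.card), evalOn Ψ (x ∘ e) K * evalOn Φ (x ∘ e) Kᶜ := rfl
    _ = ∑ K ∈ (univ : Finset (Fin S.card)).powerset,
          evalOn Ψ x (K.map e.toEmbedding) * evalOn Φ x (S \ K.map e.toEmbedding) := by
      rw [powerset_univ]
      refine sum_congr rfl fun K _ => ?_
      have hcompl : S \ K.map e.toEmbedding = Kᶜ.map e.toEmbedding := by
        rw [compl_eq_univ_sdiff, Finset.map_sdiff, hS]
      rw [hcompl, evalOn_map, evalOn_map]
    _ = ∑ J ∈ S.powerset, evalOn Ψ x J * evalOn Φ x (S \ J) := by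
      rw [← sum_powerset_map e.toEmbedding univ fun J => evalOn Ψ x J * evalOn Φ x (S \ J), hS]

theorem conv_conv_apply (Ψ Φ Θ : CF E) (n : ℕ) (x : Fin n → E) :
    conv Ψ (conv Φ Θ) n x = ∑ I : Finset (Fin n), ∑ J : Finset (Fin n),
      if Disjoint I J then evalOn Ψ x I * (evalOn Φ x J * evalOn Θ x (I ∪ J)ᶜ) else 0 := by
  rw [conv_apply]
  refine sum_congr rfl fun I _ => ?_
  have hfilter : Iᶜ.powerset = ({J | Disjoint I J} : Finset (Finset (Fin n))) := by
    ext J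
    simp [subset_compl_iff_disjoint_left]
  rw [evalOn_conv, mul_sum, ← sum_filter, hfilter]
  simp only [sdiff_eq, compl_union, inf_eq_inter]

theorem conv_left_comm (Ψ Φ Θ : CF E) : conv Ψ (conv Φ Θ) = conv Φ (conv Ψ Θ) := by
  funext n x
  rw [conv_conv_apply, conv_conv_apply, sum_comm]
  refine sum_congr rfl fun I _ => sum_congr rfl fun J _ => ?_
  simp only [union_comm, disjoint_comm, mul_left_comm]

theorem conv_add (Ψ Φ Φ' : CF E) : conv Ψ (Φ + Φ') = conv Ψ Φ + conv Ψ Φ' := by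
  funext n x
  simp only [conv, Pi.add_apply, mul_add, sum_add_distrib]

theorem conv_smul (c : ℝ) (Ψ Φ : CF E) : conv Ψ (c • Φ) = c • conv Ψ Φ := by
  funext n x
  simp only [conv, Pi.smul_apply, smul_eq_mul, mul_sum, mul_left_comm]

theorem conv_unit (Ψ : CF E) : conv Ψ unit = Ψ := by
  funext n x
  rw [conv_apply, sum_eq_single univ]
  · rw [evalOn_univ]
    simp [evalOn, unit]
  · intro I _ hI
    simp [evalOn, unit, hI]
  · simp

theorem unit_conv (Φ : CF E) : conv unit Φ = Φ := by
  simpa only [conv_unit] using conv_left_comm unit Φ unit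

theorem abs_apply_eq_zero {Φ : CF E} {n : ℕ} (h : Φ n = 0) : |Φ| n = 0 := by
  rw [Pi.abs_apply, h, abs_zero]

theorem abs_conv_le (Ψ Φ : CF E) : |conv Ψ Φ| ≤ conv |Ψ| |Φ| := fun _ _ =>
  (abs_sum_le_sum_abs _ _).trans_eq <| sum_congr rfl fun _ _ => abs_mul _ _

/-! ### Derivations and the star-exponential -/

theorem starPow_apply_eq_zero {Φ : CF E} (h₀ : Φ 0 = 0) {m n : ℕ} (hnm : n < m) :
    starPow Φ m n = 0 := by
  induction m generalizing n with
  | zero => omega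
  | succ m ih =>
    funext x
    change ∑ I : Finset (Fin n), _ = (0 : ℝ)
    refine Finset.sum_eq_zero fun I _ => ?_
    obtain rfl | hI := I.eq_empty_or_nonempty
    · exact mul_eq_zero_of_left (evalOn_empty_of_apply_zero h₀ x) _
    · have hcompl : Iᶜ.card < m := by
        have := card_add_card_compl I
        have := hI.card_pos
        rw [Fintype.card_fin] at *
        omega
      rw [ih hcompl, Pi.zero_apply, mul_zero]

@[simp]
theorem starExp_zero_apply (Φ : CF E) (x : Fin 0 → E) : starExp Φ 0 x = 1 := by
  simp [starExp, starPow, unit]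

/-- The partial sum over `m < K` of the series defining the star-exponential. -/
noncomputable def starExpTrunc (Φ : CF E) (K : ℕ) : CF E :=
  ∑ m ∈ range K, (m.factorial : ℝ)⁻¹ • starPow Φ m

theorem starExpTrunc_succ (Φ : CF E) (K : ℕ) :
    starExpTrunc Φ (K + 1) = starExpTrunc Φ K + (K.factorial : ℝ)⁻¹ • starPow Φ K :=
  sum_range_succ _ K

theorem starExpTrunc_apply {Φ : CF E} (h₀ : Φ 0 = 0) {n K : ℕ} (hn : n < K) :
    starExpTrunc Φ K n = starExp Φ n := by
  funext x
  simp only [starExpTrunc, starExp, Finset.sum_apply, Pi.smul_apply, smul_eq_mul]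
  refine (sum_subset (range_subset_range.2 hn) fun m _ hm => ?_).symm
  have hnm : n < m := by simpa using hm
  rw [starPow_apply_eq_zero h₀ hnm, Pi.zero_apply, mul_zero]

theorem conv_starExpTrunc_apply (Ψ : CF E) {Φ : CF E} (h₀ : Φ 0 = 0) {n K : ℕ} (hn : n < K) :
    conv Ψ (starExpTrunc Φ K) n = conv Ψ (starExp Φ) n := by
  funext x
  refine sum_congr rfl fun I _ => ?_
  have hcard : Iᶜ.card < K := (card_le_univ _).trans_lt (by simpa using hn)
  rw [starExpTrunc_apply h₀ hcard]

/-- A derivation of the convolution algebra that looks up by at most one degree; both `D x` and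
the number operator are of this kind. -/
structure IsConvDerivation (δ : CF E →ₗ[ℝ] CF E) : Prop where
  leibniz : ∀ Ψ Φ, δ (conv Ψ Φ) = conv (δ Ψ) Φ + conv Ψ (δ Φ)
  apply_congr : ∀ {Ψ Φ : CF E} {n : ℕ}, (∀ m ≤ n + 1, Ψ m = Φ m) → δ Ψ n = δ Φ n

namespace IsConvDerivation

variable {δ : CF E →ₗ[ℝ] CF E}

theorem map_unit (hδ : IsConvDerivation δ) : δ unit = 0 := by
  have h := hδ.leibniz unit unit
  rwa [conv_unit, conv_unit, unit_conv, left_eq_add] at h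

theorem map_starPow_succ (hδ : IsConvDerivation δ) (Φ : CF E) (m : ℕ) :
    δ (starPow Φ (m + 1)) = (m + 1 : ℝ) • conv (δ Φ) (starPow Φ m) := by
  induction m with
  | zero => simp [starPow, conv_unit]
  | succ m ih =>
    calc δ (conv Φ (starPow Φ (m + 1)))
        = conv (δ Φ) (starPow Φ (m + 1)) + (m + 1 : ℝ) • conv (δ Φ) (starPow Φ (m + 1)) := by
          rw [hδ.leibniz, ih, conv_smul, conv_left_comm]
          rfl
      _ = ((m + 1 : ℕ) + 1 : ℝ) • conv (δ Φ) (starPow Φ (m + 1)) := by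
          push_cast
          module

theorem map_starExpTrunc_succ (hδ : IsConvDerivation δ) (Φ : CF E) (K : ℕ) :
    δ (starExpTrunc Φ (K + 1)) = conv (δ Φ) (starExpTrunc Φ K) := by
  induction K with
  | zero =>
    funext n x
    simp [starExpTrunc, starPow, hδ.map_unit, conv]
  | succ K ih =>
    have hcoeff : ((K + 1).factorial : ℝ)⁻¹ * (K + 1) = (K.factorial : ℝ)⁻¹ := by
      rw [Nat.factorial_succ]
      push_cast
      field_simp
    rw [starExpTrunc_succ, map_add, ih, map_smul, hδ.map_starPow_succ, smul_smul, hcoeff,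
      starExpTrunc_succ, conv_add, conv_smul]

theorem map_starExp (hδ : IsConvDerivation δ) {Φ : CF E} (h₀ : Φ 0 = 0) :
    δ (starExp Φ) = conv (δ Φ) (starExp Φ) := by
  funext n
  calc δ (starExp Φ) n
      = δ (starExpTrunc Φ (n + 2)) n :=
        hδ.apply_congr fun m hm => (starExpTrunc_apply h₀ (by omega)).symm
    _ = conv (δ Φ) (starExp Φ) n := by
        rw [hδ.map_starExpTrunc_succ, conv_starExpTrunc_apply _ h₀ n.lt_succ_self]

end IsConvDerivation

/-- The number operator `(NΦ)⁽ⁿ⁾ = n Φ⁽ⁿ⁾`. -/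
noncomputable def numOp : CF E →ₗ[ℝ] CF E where
  toFun Φ := fun n x => n * Φ n x
  map_add' _ _ := by
    funext n x
    exact mul_add _ _ _
  map_smul' _ _ := by
    funext n x
    exact mul_left_comm _ _ _

theorem numOp_apply (Φ : CF E) (n : ℕ) (x : Fin n → E) : numOp Φ n x = n * Φ n x := rfl

theorem isConvDerivation_numOp : IsConvDerivation (numOp : CF E →ₗ[ℝ] CF E) where
  leibniz Ψ Φ := by
    funext n x
    simp only [numOp_apply, conv, Pi.add_apply, mul_sum, ← sum_add_distrib]
    refine sum_congr rfl fun I _ => ?_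
    have hcard : (n : ℝ) = I.card + Iᶜ.card := by
      exact_mod_cast ((card_add_card_compl I).trans (Fintype.card_fin n)).symm
    rw [hcard]
    ring
  apply_congr h := by
    funext x
    rw [numOp_apply, numOp_apply, h _ (Nat.le_succ _)]

theorem evalOn_cons_map_succ (Φ : CF E) (a : E) {n : ℕ} (y : Fin n → E) (I : Finset (Fin n)) :
    evalOn Φ (Fin.cons a y : Fin (n + 1) → E) (I.map (Fin.succEmb n)) = evalOn Φ y I :=
  evalOn_map Φ (Fin.cons a y : Fin (n + 1) → E) (Fin.succOrderEmb n) I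

theorem evalOn_cons_insert_zero (Φ : CF E) (a : E) {n : ℕ} (y : Fin n → E)
    (I : Finset (Fin n)) :
    evalOn Φ (Fin.cons a y : Fin (n + 1) → E) (insert 0 (I.map (Fin.succEmb n))) =
      evalOn (D a Φ) y I := by
  set e : Fin I.card ↪o Fin n := I.orderEmbOfFin rfl
  let f : Fin (I.card + 1) ↪o Fin (n + 1) :=
    OrderEmbedding.ofStrictMono (Fin.cons 0 fun i => (e i).succ) <| by
      refine fun i j => Fin.cases ?_ (fun i => ?_) i <;>
        refine Fin.cases ?_ (fun j => ?_) j <;> simp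
  have hrange : insert 0 (I.map (Fin.succEmb n)) = univ.map f.toEmbedding := by
    rw [Fin.univ_succ, map_cons, cons_eq_insert, map_map]
    congr 1
    conv_lhs => rw [← map_orderEmbOfFin_univ I rfl, map_map]
    rfl
  have hcomp : (Fin.cons a y : Fin (n + 1) → E) ∘ f = Fin.cons a (sub y I) := by
    funext i
    exact Fin.cases rfl (fun _ => rfl) i
  rw [hrange, evalOn_map_univ, hcomp]
  rfl

theorem sum_finset_fin_succ {M : Type*} [AddCommMonoid M] (n : ℕ) (g : Finset (Fin (n + 1)) → M) :
    ∑ I, g I = ∑ I : Finset (Fin n), g (insert 0 (I.map (Fin.succEmb n))) +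
      ∑ I : Finset (Fin n), g (I.map (Fin.succEmb n)) := by
  have huniv : (univ : Finset (Fin (n + 1))) = insert 0 (univ.map (Fin.succEmb n)) := by
    rw [Fin.univ_succ, cons_eq_insert]
    rfl
  rw [← powerset_univ, huniv, sum_powerset_insert (by simp), sum_powerset_map,
    sum_powerset_map (Fin.succEmb n) univ fun J => g (insert 0 J), powerset_univ, add_comm]

theorem D_conv (a : E) (Ψ Φ : CF E) : D a (conv Ψ Φ) = conv (D a Ψ) Φ + conv Ψ (D a Φ) := by
  funext n y
  have hinsert : ∀ I : Finset (Fin n),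
      (insert 0 (I.map (Fin.succEmb n)))ᶜ = Iᶜ.map (Fin.succEmb n) := by
    refine fun I => Finset.ext fun b => ?_
    refine Fin.cases ?_ (fun i => ?_) b <;> simp
  have hmap : ∀ I : Finset (Fin n),
      (I.map (Fin.succEmb n))ᶜ = insert 0 (Iᶜ.map (Fin.succEmb n)) := fun I => by
    rw [← compl_inj_iff, compl_compl, hinsert, compl_compl]
  rw [D, conv_apply, sum_finset_fin_succ]
  simp only [hinsert, hmap, evalOn_cons_map_succ, evalOn_cons_insert_zero]
  rfl

/-- The derivative `D a` as a linear map. -/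
noncomputable def derivL (a : E) : CF E →ₗ[ℝ] CF E where
  toFun := D a
  map_add' _ _ := rfl
  map_smul' _ _ := rfl

theorem isConvDerivation_derivL (a : E) : IsConvDerivation (derivL a) where
  leibniz := D_conv a
  apply_congr h := by
    funext y
    exact congrFun (h _ le_rfl) _

theorem D_starExp (a : E) {Φ : CF E} (h₀ : Φ 0 = 0) :
    D a (starExp Φ) = conv (D a Φ) (starExp Φ) :=
  (isConvDerivation_derivL a).map_starExp h₀

/-- The functional `exp∗ Φ - 𝟙`. -/
noncomputable def starExpSubUnit (Φ : CF E) : CF E := starExp Φ - unit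

theorem starExpSubUnit_zero (Φ : CF E) : starExpSubUnit Φ 0 = 0 := by
  funext x
  simp [starExpSubUnit, unit]

theorem starExpSubUnit_of_ne_zero (Φ : CF E) {n : ℕ} (hn : n ≠ 0) :
    starExpSubUnit Φ n = starExp Φ n := by
  funext x
  simp [starExpSubUnit, unit, hn]

theorem numOp_eq_sub_conv {Φ : CF E} (h₀ : Φ 0 = 0) :
    numOp Φ = numOp (starExpSubUnit Φ) - conv (numOp Φ) (starExpSubUnit Φ) := by
  have hE : starExp Φ = starExpSubUnit Φ + unit := (sub_add_cancel _ _).symm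
  have hN := isConvDerivation_numOp.map_starExp h₀
  rw [hE, map_add, isConvDerivation_numOp.map_unit, add_zero, conv_add, conv_unit] at hN
  rw [hN, add_sub_cancel_left]

theorem abs_numOp (Φ : CF E) : |numOp Φ| = numOp |Φ| := by
  funext n x
  exact (abs_mul _ _).trans (congrArg (· * |Φ n x|) (Nat.abs_cast n))

theorem numOp_abs_le {Φ : CF E} (h₀ : Φ 0 = 0) :
    numOp |Φ| ≤ numOp |starExpSubUnit Φ| + conv (numOp |Φ|) |starExpSubUnit Φ| := by
  simp only [← abs_numOp]
  calc |numOp Φ| = |numOp (starExpSubUnit Φ) - conv (numOp Φ) (starExpSubUnit Φ)| := by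
        rw [← numOp_eq_sub_conv h₀]
    _ ≤ |numOp (starExpSubUnit Φ)| + |conv (numOp Φ) (starExpSubUnit Φ)| :=
        fun n x => abs_sub (numOp (starExpSubUnit Φ) n x) _
    _ ≤ |numOp (starExpSubUnit Φ)| + conv |numOp Φ| |starExpSubUnit Φ| :=
        add_le_add_right (abs_conv_le _ _) _

theorem mem_of_eq_sub_conv (V : ∀ n, Submodule ℝ ((Fin n → E) → ℝ))
    (hV : ∀ {n} (I : Finset (Fin n)), ∀ f ∈ V I.card, ∀ g ∈ V Iᶜ.card,
      (fun x => f (sub x I) * g (sub x Iᶜ)) ∈ V n)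
    {F G W : CF E} (hF : F = G - conv F W) (hW₀ : W 0 = 0) (hG : ∀ n, G n ∈ V n)
    (hW : ∀ n, W n ∈ V n) (n : ℕ) : F n ∈ V n := by
  induction n using Nat.strong_induction_on with
  | _ n ih =>
    have hterm : ∀ I : Finset (Fin n), (fun x => evalOn F x I * evalOn W x Iᶜ) ∈ V n := by
      intro I
      obtain rfl | hI := eq_or_ne I univ
      · simp only [compl_univ, evalOn_empty_of_apply_zero hW₀, mul_zero]
        exact (V n).zero_mem
      · have hlt : I.card < n := by simpa using (card_lt_iff_ne_univ I).2 hI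
        exact hV I _ (ih _ hlt) _ (hW _)
    have hconv : conv F W n = ∑ I, fun x => evalOn F x I * evalOn W x Iᶜ := by
      funext x
      rw [conv_apply, Finset.sum_apply]
    rw [hF, Pi.sub_apply, hconv]
    exact sub_mem (hG n) (sum_mem fun I _ => hterm I)

theorem mem_of_starExp_mem (V : ∀ n, Submodule ℝ ((Fin n → E) → ℝ))
    (hV : ∀ {n} (I : Finset (Fin n)), ∀ f ∈ V I.card, ∀ g ∈ V Iᶜ.card,
      (fun x => f (sub x I) * g (sub x Iᶜ)) ∈ V n)
    {Φ : CF E} (h₀ : Φ 0 = 0) (hE : ∀ n, starExp Φ n ∈ V n) (n : ℕ) : Φ n ∈ V n := by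
  have hW : ∀ n, starExpSubUnit Φ n ∈ V n := fun n => by
    obtain rfl | hn := eq_or_ne n 0
    · exact starExpSubUnit_zero Φ ▸ (V 0).zero_mem
    · exact starExpSubUnit_of_ne_zero Φ hn ▸ hE n
  have hN : numOp Φ n ∈ V n :=
    mem_of_eq_sub_conv V hV (numOp_eq_sub_conv h₀) (starExpSubUnit_zero Φ)
      (fun n => (V n).smul_mem n (hW n)) hW n
  obtain rfl | hn := eq_or_ne n 0
  · exact h₀ ▸ (V 0).zero_mem
  · exact ((V n).smul_mem_iff (Nat.cast_ne_zero.2 hn : (n : ℝ) ≠ 0)).1 hN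

end CF

/-! ### Absolutely summable power series -/

section PowerSeries

open PowerSeries

variable {R : Type*} [NormedCommRing R]

theorem summable_norm_coeff_mul {f g : R⟦X⟧} (hf : Summable fun n => ‖coeff n f‖)
    (hg : Summable fun n => ‖coeff n g‖) : Summable fun n => ‖coeff n (f * g)‖ := by
  simp only [coeff_mul]
  exact summable_norm_sum_mul_antidiagonal_of_summable_norm (f := (coeff · f)) (g := (coeff · g))
    hf hg

theorem tsum_norm_coeff_mul_le {f g : R⟦X⟧} (hf : Summable fun n => ‖coeff n f‖)
    (hg : Summable fun n => ‖coeff n g‖) :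
    ∑' n, ‖coeff n (f * g)‖ ≤ (∑' n, ‖coeff n f‖) * ∑' n, ‖coeff n g‖ := by
  have hprod := summable_norm_sum_mul_antidiagonal_of_summable_norm hf.norm hg.norm
  have hle : ∀ n, ‖coeff n (f * g)‖ ≤
      ∑ p ∈ antidiagonal n, ‖coeff p.1 f‖ * ‖coeff p.2 g‖ := fun n => by
    rw [coeff_mul]
    exact norm_sum_le_of_le _ fun p _ => norm_mul_le _ _
  rw [tsum_mul_tsum_eq_tsum_sum_antidiagonal_of_summable_norm hf.norm hg.norm]
  exact (summable_norm_coeff_mul hf hg).tsum_le_tsum hle hprod.of_norm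

theorem tsum_coeff_mul [CompleteSpace R] {f g : R⟦X⟧} (hf : Summable fun n => ‖coeff n f‖)
    (hg : Summable fun n => ‖coeff n g‖) :
    ∑' n, coeff n (f * g) = (∑' n, coeff n f) * ∑' n, coeff n g := by
  simp only [coeff_mul]
  exact (tsum_mul_tsum_eq_tsum_sum_antidiagonal_of_summable_norm hf hg).symm

theorem hasSum_coeff_one : HasSum (fun n => coeff n (1 : R⟦X⟧)) 1 := by
  simpa using hasSum_single 0 fun n hn => show coeff n (1 : R⟦X⟧) = 0 by rw [coeff_one, if_neg hn]

theorem hasSum_norm_coeff_one [NormOneClass R] : HasSum (fun n => ‖coeff n (1 : R⟦X⟧)‖) 1 := by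
  simpa using hasSum_single 0
    fun n hn => show ‖coeff n (1 : R⟦X⟧)‖ = 0 by rw [coeff_one, if_neg hn, norm_zero]

theorem coeff_subst_eq_tsum {f h : R⟦X⟧} (hf₀ : constantCoeff f = 0) (n : ℕ) :
    coeff n (h.subst f) = ∑' m, coeff m h * coeff n (f ^ m) := by
  have hsubst : HasSubst f := .of_constantCoeff_zero' hf₀
  rw [coeff_subst' hsubst,
    ← tsum_eq_finsum (L := .unconditional ℕ) (coeff_subst_finite' hsubst h n)]
  rfl

variable [NormOneClass R]

theorem summable_norm_coeff_pow {f : R⟦X⟧} (hf : Summable fun n => ‖coeff n f‖) (m : ℕ) :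
    Summable fun n => ‖coeff n (f ^ m)‖ := by
  induction m with
  | zero => simpa only [pow_zero] using hasSum_norm_coeff_one.summable
  | succ m ih => simpa only [pow_succ] using summable_norm_coeff_mul ih hf

theorem tsum_norm_coeff_pow_le {f : R⟦X⟧} (hf : Summable fun n => ‖coeff n f‖) (m : ℕ) :
    ∑' n, ‖coeff n (f ^ m)‖ ≤ (∑' n, ‖coeff n f‖) ^ m := by
  induction m with
  | zero => simpa only [pow_zero] using hasSum_norm_coeff_one.tsum_eq.le
  | succ m ih =>
    rw [pow_succ, pow_succ]
    refine (tsum_norm_coeff_mul_le (summable_norm_coeff_pow hf m) hf).trans ?_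
    gcongr

theorem summable_norm_coeff_mul_coeff_pow {f h : R⟦X⟧} (hf : Summable fun n => ‖coeff n f‖)
    (hh : Summable fun m => ‖coeff m h‖ * (∑' n, ‖coeff n f‖) ^ m) :
    Summable fun p : ℕ × ℕ => ‖coeff p.1 h * coeff p.2 (f ^ p.1)‖ := by
  have hmajorant : Summable fun p : ℕ × ℕ => ‖coeff p.1 h‖ * ‖coeff p.2 (f ^ p.1)‖ := by
    rw [summable_prod_of_nonneg fun _ => by positivity]
    refine ⟨fun m => (summable_norm_coeff_pow hf m).mul_left ‖coeff m h‖,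
      .of_nonneg_of_le (fun m => tsum_nonneg fun n => by positivity) (fun m => ?_) hh⟩
    dsimp only
    rw [tsum_mul_left]
    gcongr
    exact tsum_norm_coeff_pow_le hf m
  exact .of_nonneg_of_le (fun _ => norm_nonneg _) (fun _ => norm_mul_le _ _) hmajorant

theorem summable_norm_coeff_subst {f h : R⟦X⟧} (hf₀ : constantCoeff f = 0)
    (hf : Summable fun n => ‖coeff n f‖)
    (hh : Summable fun m => ‖coeff m h‖ * (∑' n, ‖coeff n f‖) ^ m) :
    Summable fun n => ‖coeff n (h.subst f)‖ := by
  have hdouble := (summable_norm_coeff_mul_coeff_pow hf hh).prod_symm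
  refine .of_nonneg_of_le (fun _ => norm_nonneg _) (fun n => ?_) hdouble.prod
  rw [coeff_subst_eq_tsum hf₀]
  exact norm_tsum_le_tsum_norm (hdouble.prod_factor n)

variable [CompleteSpace R]

theorem tsum_coeff_pow {f : R⟦X⟧} (hf : Summable fun n => ‖coeff n f‖) (m : ℕ) :
    ∑' n, coeff n (f ^ m) = (∑' n, coeff n f) ^ m := by
  induction m with
  | zero => simpa only [pow_zero] using hasSum_coeff_one.tsum_eq
  | succ m ih => rw [pow_succ, pow_succ, tsum_coeff_mul (summable_norm_coeff_pow hf m) hf, ih]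

theorem tsum_coeff_subst {f h : R⟦X⟧} (hf₀ : constantCoeff f = 0)
    (hf : Summable fun n => ‖coeff n f‖)
    (hh : Summable fun m => ‖coeff m h‖ * (∑' n, ‖coeff n f‖) ^ m) :
    ∑' n, coeff n (h.subst f) = ∑' m, coeff m h * (∑' n, coeff n f) ^ m := by
  have hdouble : Summable (Function.uncurry fun m n => coeff m h * coeff n (f ^ m)) :=
    (summable_norm_coeff_mul_coeff_pow hf hh).of_norm
  simp only [coeff_subst_eq_tsum hf₀]
  rw [hdouble.tsum_comm]
  refine tsum_congr fun m => ?_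
  rw [(summable_norm_coeff_pow hf m).of_norm.tsum_mul_left, tsum_coeff_pow hf]

end PowerSeries

section RealExp

open PowerSeries

theorem summable_norm_coeff_exp_mul_pow (s : ℝ) :
    Summable fun m => ‖coeff m (exp ℝ)‖ * s ^ m := by
  simpa [coeff_exp, div_eq_inv_mul] using Real.summable_pow_div_factorial s

theorem summable_norm_coeff_exp_subst {f : ℝ⟦X⟧} (hf₀ : constantCoeff f = 0)
    (hf : Summable fun n => ‖coeff n f‖) : Summable fun n => ‖coeff n ((exp ℝ).subst f)‖ :=
  summable_norm_coeff_subst hf₀ hf (summable_norm_coeff_exp_mul_pow _)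

theorem tsum_coeff_exp_subst {f : ℝ⟦X⟧} (hf₀ : constantCoeff f = 0)
    (hf : Summable fun n => ‖coeff n f‖) :
    ∑' n, coeff n ((exp ℝ).subst f) = Real.exp (∑' n, coeff n f) := by
  rw [tsum_coeff_subst hf₀ hf (summable_norm_coeff_exp_mul_pow _), Real.exp_eq_exp_ℝ,
    NormedSpace.exp_eq_tsum_div]
  simp [coeff_exp, div_eq_inv_mul]

end RealExp

theorem le_pow_of_le_add_sum {C δ : ℝ} (hC : 0 ≤ C) (hδ : 0 ≤ δ) {u : ℕ → ℝ}
    (hu : ∀ n, u n ≤ n * (C * δ ^ n) + ∑ i ∈ range n, u i * (C * δ ^ (n - i))) (n : ℕ) :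
    u n ≤ (δ * (1 + 2 * C)) ^ n := by
  induction n using Nat.strong_induction_on with
  | _ n ih =>
    have hterm : ∀ i ∈ range n, u i * (C * δ ^ (n - i)) ≤ C * δ ^ n * (1 + 2 * C) ^ i := by
      intro i hi
      have hin : i < n := mem_range.1 hi
      calc u i * (C * δ ^ (n - i)) ≤ (δ * (1 + 2 * C)) ^ i * (C * δ ^ (n - i)) := by
            gcongr
            exact ih i hin
        _ = C * δ ^ n * (1 + 2 * C) ^ i := by
            rw [mul_pow, ← pow_mul_pow_sub δ hin.le]
            ring
    have hgeom : C * ∑ i ∈ range n, (1 + 2 * C) ^ i = ((1 + 2 * C) ^ n - 1) / 2 := by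
      linear_combination (geom_sum_mul (1 + 2 * C) n) / 2
    have hbernoulli : 1 + n * (2 * C) ≤ (1 + 2 * C) ^ n := one_add_mul_le_pow (by linarith) n
    calc u n ≤ n * (C * δ ^ n) + ∑ i ∈ range n, C * δ ^ n * (1 + 2 * C) ^ i :=
          (hu n).trans (add_le_add_right (sum_le_sum hterm) _)
      _ = δ ^ n * (n * C + ((1 + 2 * C) ^ n - 1) / 2) := by
          rw [← mul_sum, ← hgeom]
          ring
      _ ≤ δ ^ n * (1 + 2 * C) ^ n := by
          gcongr
          linarith
      _ = (δ * (1 + 2 * C)) ^ n := (mul_pow _ _ _).symm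

namespace CF

variable {E : Type} [MeasurableSpace E]

/-! ### Integration of configuration functionals -/

theorem measurable_sub {n : ℕ} (I : Finset (Fin n)) :
    Measurable fun x : Fin n → E => sub x I := by
  unfold sub
  fun_prop

theorem measurable_of_measurable_starExp {Φ : CF E} (h₀ : Φ 0 = 0)
    (hE : ∀ n, Measurable (starExp Φ n)) (n : ℕ) : Measurable (Φ n) :=
  mem_of_starExp_mem
    (fun _ =>
      { carrier := {f | Measurable f}
        add_mem' := Measurable.add
        zero_mem' := measurable_const
        smul_mem' := fun c _ hf => hf.const_smul c })
    (fun I _ hf _ hg => (hf.comp (measurable_sub I)).mul (hg.comp (measurable_sub Iᶜ))) h₀ hE n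

theorem measurable_D (a : E) {Φ : CF E} (hΦ : ∀ n, Measurable (Φ n)) (n : ℕ) :
    Measurable (D a Φ n) := by
  refine (hΦ (n + 1)).comp (measurable_pi_iff.2 fun i => ?_)
  refine Fin.cases ?_ (fun i => ?_) i
  · simp
  · simpa using measurable_pi_apply i

/-- All components of `Φ` are integrable against the powers of `ν`. -/
def IsIntegrable (ν : Measure E) (Φ : CF E) : Prop :=
  ∀ n, Integrable (Φ n) (Measure.pi fun _ => ν)

/-- The generating series `∑ₖ Xᵏ zᵏ/k! ∫ Φ⁽ᵏ⁾ dνᵏ`, whose multiplication corresponds to `conv`.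
The value `z = -1` gives the Janossy series, `z = 1` is used for majorants. -/
noncomputable def genSeries (ν : Measure E) (z : ℝ) (Φ : CF E) : PowerSeries ℝ :=
  .mk fun k => z ^ k / k.factorial * ∫ x, Φ k x ∂(Measure.pi fun _ => ν)

open PowerSeries (coeff constantCoeff)

variable {ν : Measure E}

theorem coeff_genSeries (z : ℝ) (Φ : CF E) (n : ℕ) :
    coeff n (genSeries ν z Φ) =
      z ^ n / n.factorial * ∫ x, Φ n x ∂(Measure.pi fun _ => ν) :=
  PowerSeries.coeff_mk _ _

theorem coeff_genSeries_numOp (z : ℝ) (Φ : CF E) (n : ℕ) :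
    coeff n (genSeries ν z (numOp Φ)) = n * coeff n (genSeries ν z Φ) := by
  simp only [coeff_genSeries, numOp_apply, integral_const_mul]
  ring

theorem genSeries_smul (z c : ℝ) (Φ : CF E) : genSeries ν z (c • Φ) = c • genSeries ν z Φ := by
  ext n
  simp only [coeff_genSeries, PowerSeries.coeff_smul, Pi.smul_apply, smul_eq_mul,
    integral_const_mul]
  ring

theorem coeff_genSeries_of_apply_eq_zero (z : ℝ) {Φ : CF E} {n : ℕ} (h : Φ n = 0) :
    coeff n (genSeries ν z Φ) = 0 := by
  simp [coeff_genSeries, h]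

theorem constantCoeff_genSeries (z : ℝ) {Φ : CF E} (h₀ : Φ 0 = 0) :
    constantCoeff (genSeries ν z Φ) = 0 := by
  rw [← PowerSeries.coeff_zero_eq_constantCoeff_apply]
  exact coeff_genSeries_of_apply_eq_zero z h₀

theorem coeff_genSeries_abs_nonneg {z : ℝ} (hz : 0 ≤ z) (Φ : CF E) (n : ℕ) :
    0 ≤ coeff n (genSeries ν z |Φ|) := by
  rw [coeff_genSeries]
  exact mul_nonneg (by positivity) (integral_nonneg fun x => abs_nonneg (Φ n x))

theorem coeff_genSeries_mono {z : ℝ} (hz : 0 ≤ z) {Ψ Φ : CF E} (hΨ : IsIntegrable ν Ψ)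
    (hΦ : IsIntegrable ν Φ) (hle : Ψ ≤ Φ) (n : ℕ) :
    coeff n (genSeries ν z Ψ) ≤ coeff n (genSeries ν z Φ) := by
  rw [coeff_genSeries, coeff_genSeries]
  gcongr ?_ * ?_
  exact integral_mono (hΨ n) (hΦ n) (hle n)

theorem coeff_genSeries_add (z : ℝ) {Ψ Φ : CF E} (hΨ : IsIntegrable ν Ψ)
    (hΦ : IsIntegrable ν Φ) (n : ℕ) :
    coeff n (genSeries ν z (Ψ + Φ)) = coeff n (genSeries ν z Ψ) + coeff n (genSeries ν z Φ) := by
  simp only [coeff_genSeries, Pi.add_apply]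
  rw [integral_add (hΨ n) (hΦ n), mul_add]

theorem genSeries_unit (z : ℝ) : genSeries ν z unit = 1 := by
  ext n
  obtain rfl | hn := eq_or_ne n 0
  · rw [coeff_genSeries, Measure.pi_of_empty]
    simp [unit]
  · simp [coeff_genSeries, unit, hn, PowerSeries.coeff_one]

namespace IsIntegrable

theorem abs {Φ : CF E} (hΦ : IsIntegrable ν Φ) : IsIntegrable ν |Φ| := fun n => (hΦ n).abs

theorem add {Ψ Φ : CF E} (hΨ : IsIntegrable ν Ψ) (hΦ : IsIntegrable ν Φ) :
    IsIntegrable ν (Ψ + Φ) := fun n => (hΨ n).add (hΦ n)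

theorem sub {Ψ Φ : CF E} (hΨ : IsIntegrable ν Ψ) (hΦ : IsIntegrable ν Φ) :
    IsIntegrable ν (Ψ - Φ) := fun n => (hΨ n).sub (hΦ n)

theorem smul (c : ℝ) {Φ : CF E} (hΦ : IsIntegrable ν Φ) : IsIntegrable ν (c • Φ) := fun n =>
  (hΦ n).smul c

theorem numOp {Φ : CF E} (hΦ : IsIntegrable ν Φ) : IsIntegrable ν (numOp Φ) := fun n =>
  (hΦ n).const_mul n

theorem unit : IsIntegrable ν unit := fun n => by
  obtain rfl | hn := eq_or_ne n 0
  · rw [Measure.pi_of_empty]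
    exact .of_finite
  · have hzero : (CF.unit : CF E) n = 0 := funext fun _ => if_neg hn
    rw [hzero]
    exact integrable_zero _ _ _

end IsIntegrable

variable [SigmaFinite ν]

theorem measurePreserving_sub_prod_sub_compl (ν : Measure E) [SigmaFinite ν] {n : ℕ}
    (I : Finset (Fin n)) :
    MeasurePreserving (fun x : Fin n → E => (sub x I, sub x Iᶜ)) (Measure.pi fun _ => ν)
      ((Measure.pi fun _ => ν).prod (Measure.pi fun _ => ν)) :=
  (measurePreserving_sumPiEquivProdPi (X := fun _ : Fin I.card ⊕ Fin Iᶜ.card => E)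
    fun _ => ν).comp
    (measurePreserving_piCongrLeft (fun _ => ν) (finSumEquivOfFinset (s := I) rfl rfl)).symm

theorem integrable_sub_mul_sub_compl {n : ℕ} (I : Finset (Fin n)) {f : (Fin I.card → E) → ℝ}
    {g : (Fin Iᶜ.card → E) → ℝ} (hf : Integrable f (Measure.pi fun _ => ν))
    (hg : Integrable g (Measure.pi fun _ => ν)) :
    Integrable (fun x : Fin n → E => f (sub x I) * g (sub x Iᶜ)) (Measure.pi fun _ => ν) :=
  (measurePreserving_sub_prod_sub_compl ν I).integrable_comp_of_integrable (hf.mul_prod hg)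

theorem integral_sub_mul_sub_compl {n : ℕ} (I : Finset (Fin n)) {f : (Fin I.card → E) → ℝ}
    {g : (Fin Iᶜ.card → E) → ℝ} (hf : Integrable f (Measure.pi fun _ => ν))
    (hg : Integrable g (Measure.pi fun _ => ν)) :
    ∫ x : Fin n → E, f (sub x I) * g (sub x Iᶜ) ∂(Measure.pi fun _ => ν) =
      (∫ x, f x ∂(Measure.pi fun _ => ν)) * ∫ x, g x ∂(Measure.pi fun _ => ν) := by
  have hmp := measurePreserving_sub_prod_sub_compl ν I
  have hfg := (hf.mul_prod hg).aestronglyMeasurable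
  rw [← integral_prod_mul]
  rw [← hmp.map_eq] at hfg ⊢
  rw [integral_map hmp.aemeasurable hfg]

namespace IsIntegrable

theorem conv {Ψ Φ : CF E} (hΨ : IsIntegrable ν Ψ) (hΦ : IsIntegrable ν Φ) :
    IsIntegrable ν (conv Ψ Φ) := fun _ =>
  integrable_finsetSum _ fun I _ => integrable_sub_mul_sub_compl I (hΨ _) (hΦ _)

theorem starPow {Φ : CF E} (hΦ : IsIntegrable ν Φ) (m : ℕ) : IsIntegrable ν (starPow Φ m) := by
  induction m with
  | zero => exact .unit
  | succ m ih => exact hΦ.conv ih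

theorem starExp {Φ : CF E} (hΦ : IsIntegrable ν Φ) : IsIntegrable ν (starExp Φ) := fun n =>
  integrable_finsetSum _ fun m _ => (hΦ.starPow m n).const_mul _

theorem of_starExp {Φ : CF E} (h₀ : Φ 0 = 0) (hE : IsIntegrable ν (CF.starExp Φ)) :
    IsIntegrable ν Φ :=
  mem_of_starExp_mem
    (fun _ =>
      { carrier := {f | Integrable f (Measure.pi fun _ => ν)}
        add_mem' := Integrable.add
        zero_mem' := integrable_zero _ _ _
        smul_mem' := fun c _ hf => hf.smul c })
    (fun I _ hf _ hg => integrable_sub_mul_sub_compl I hf hg) h₀ hE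

end IsIntegrable

theorem integral_conv {Ψ Φ : CF E} (hΨ : IsIntegrable ν Ψ) (hΦ : IsIntegrable ν Φ) (n : ℕ) :
    ∫ x, conv Ψ Φ n x ∂(Measure.pi fun _ => ν) = ∑ p ∈ antidiagonal n, n.choose p.1 *
      ((∫ x, Ψ p.1 x ∂(Measure.pi fun _ => ν)) * ∫ x, Φ p.2 x ∂(Measure.pi fun _ => ν)) := by
  set a : ℕ → ℝ := fun k => ∫ x, Ψ k x ∂(Measure.pi fun _ => ν)
  set b : ℕ → ℝ := fun k => ∫ x, Φ k x ∂(Measure.pi fun _ => ν)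
  calc ∫ x, conv Ψ Φ n x ∂(Measure.pi fun _ => ν)
      = ∑ I : Finset (Fin n), a I.card * b Iᶜ.card := by
        unfold conv
        rw [integral_finsetSum _ fun I _ => integrable_sub_mul_sub_compl I (hΨ _) (hΦ _)]
        exact sum_congr rfl fun I _ => integral_sub_mul_sub_compl I (hΨ _) (hΦ _)
    _ = ∑ I ∈ (univ : Finset (Fin n)).powerset, a I.card * b (n - I.card) := by
        simp only [powerset_univ, card_compl, Fintype.card_fin]
    _ = ∑ p ∈ antidiagonal n, n.choose p.1 * (a p.1 * b p.2) := by
        rw [sum_powerset_apply_card fun k => a k * b (n - k), card_univ, Fintype.card_fin,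
          Nat.sum_antidiagonal_eq_sum_range_succ_mk]
        simp only [nsmul_eq_mul]

theorem genSeries_conv (z : ℝ) {Ψ Φ : CF E} (hΨ : IsIntegrable ν Ψ) (hΦ : IsIntegrable ν Φ) :
    genSeries ν z (conv Ψ Φ) = genSeries ν z Ψ * genSeries ν z Φ := by
  ext n
  rw [PowerSeries.coeff_mul, coeff_genSeries, integral_conv hΨ hΦ, mul_sum]
  refine sum_congr rfl fun p hp => ?_
  obtain rfl : p.1 + p.2 = n := mem_antidiagonal.1 hp
  rw [coeff_genSeries, coeff_genSeries, Nat.cast_add_choose, pow_add]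
  have := (p.1 + p.2).factorial_ne_zero
  field_simp

theorem genSeries_starPow (z : ℝ) {Φ : CF E} (hΦ : IsIntegrable ν Φ) (m : ℕ) :
    genSeries ν z (starPow Φ m) = genSeries ν z Φ ^ m := by
  induction m with
  | zero => exact genSeries_unit z
  | succ m ih => rw [starPow, genSeries_conv z hΦ (hΦ.starPow m), ih, pow_succ']

theorem genSeries_starExp (z : ℝ) {Φ : CF E} (h₀ : Φ 0 = 0) (hΦ : IsIntegrable ν Φ) :
    genSeries ν z (starExp Φ) = (PowerSeries.exp ℝ).subst (genSeries ν z Φ) := by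
  ext n
  rw [coeff_subst_eq_tsum (constantCoeff_genSeries z h₀), tsum_eq_sum (s := range (n + 1))]
  · simp only [coeff_genSeries, starExp, ← genSeries_starPow z hΦ, PowerSeries.coeff_exp]
    rw [integral_finsetSum _ fun m _ => (hΦ.starPow m n).const_mul _, mul_sum]
    refine sum_congr rfl fun m _ => ?_
    rw [integral_const_mul]
    simp only [one_div, map_inv₀, map_natCast]
    ring
  · intro m hm
    have hnm : n < m := by simpa using hm
    rw [← genSeries_starPow z hΦ,
      coeff_genSeries_of_apply_eq_zero z (starPow_apply_eq_zero h₀ hnm), mul_zero]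

/-! ### Geometric bounds for the star-logarithm -/

theorem natCast_mul_coeff_genSeries_abs_le {z : ℝ} (hz : 0 ≤ z) {Φ : CF E} (h₀ : Φ 0 = 0)
    (hE : IsIntegrable ν (starExp Φ)) (n : ℕ) :
    n * coeff n (genSeries ν z |Φ|) ≤ n * coeff n (genSeries ν z |starExpSubUnit Φ|) +
      ∑ i ∈ range n, i * coeff i (genSeries ν z |Φ|) *
        coeff (n - i) (genSeries ν z |starExpSubUnit Φ|) := by
  have hN : IsIntegrable ν (numOp |Φ|) := (IsIntegrable.of_starExp h₀ hE).abs.numOp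
  have hW : IsIntegrable ν |starExpSubUnit Φ| := (hE.sub .unit).abs
  have hW₀ : coeff 0 (genSeries ν z |starExpSubUnit Φ|) = 0 :=
    coeff_genSeries_of_apply_eq_zero z (abs_apply_eq_zero (starExpSubUnit_zero Φ))
  have hle := coeff_genSeries_mono hz hN (hW.numOp.add (hN.conv hW)) (numOp_abs_le h₀) n
  rw [coeff_genSeries_add z hW.numOp (hN.conv hW), genSeries_conv z hN hW,
    PowerSeries.coeff_mul, Nat.sum_antidiagonal_eq_sum_range_succ_mk, sum_range_succ, Nat.sub_self,
    hW₀, mul_zero, add_zero] at hle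
  simpa only [coeff_genSeries_numOp] using hle

theorem coeff_genSeries_abs_le_pow {z C δ : ℝ} (hz : 0 ≤ z) (hC : 0 ≤ C) (hδ : 0 ≤ δ) {Φ : CF E}
    (h₀ : Φ 0 = 0) (hE : IsIntegrable ν (starExp Φ))
    (hbound : ∀ n ≠ 0, coeff n (genSeries ν z |starExp Φ|) ≤ C * δ ^ n) (n : ℕ) :
    coeff n (genSeries ν z |Φ|) ≤ (δ * (1 + 2 * C)) ^ n := by
  have hW : ∀ n ≠ 0, coeff n (genSeries ν z |starExpSubUnit Φ|) ≤ C * δ ^ n := fun n hn => by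
    simpa only [coeff_genSeries, Pi.abs_apply, starExpSubUnit_of_ne_zero Φ hn] using hbound n hn
  have hnonneg := coeff_genSeries_abs_nonneg (ν := ν) hz Φ
  have hrec : n * coeff n (genSeries ν z |Φ|) ≤ (δ * (1 + 2 * C)) ^ n := by
    refine le_pow_of_le_add_sum (u := fun n => n * coeff n (genSeries ν z |Φ|)) hC hδ
      (fun n => ?_) n
    refine (natCast_mul_coeff_genSeries_abs_le hz h₀ hE n).trans ?_
    refine add_le_add ?_ (sum_le_sum fun i hi => ?_)
    · obtain rfl | hn := eq_or_ne n 0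
      · simp
      · exact mul_le_mul_of_nonneg_left (hW n hn) n.cast_nonneg
    · have hi : i < n := mem_range.1 hi
      exact mul_le_mul_of_nonneg_left (hW _ (by omega)) (mul_nonneg i.cast_nonneg (hnonneg i))
  obtain rfl | hn := eq_or_ne n 0
  · simpa using (coeff_genSeries_of_apply_eq_zero z (abs_apply_eq_zero h₀)).trans_le zero_le_one
  · exact (le_mul_of_one_le_left (hnonneg n) (mod_cast Nat.one_le_iff_ne_zero.2 hn)).trans hrec

end CF

/-! ### Exhaustion by sets of finite measure -/

open Filter Topology

theorem aecover_univ_pi {ι κ : Type*} [Fintype κ] {α : κ → Type*} [∀ i, MeasurableSpace (α i)]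
    {μ : ∀ i, Measure (α i)} [∀ i, SigmaFinite (μ i)] {l : Filter ι} {s : ∀ i, ι → Set (α i)}
    (hs : ∀ i, AECover (μ i) l (s i)) :
    AECover (Measure.pi μ) l fun j => Set.univ.pi fun i => s i j where
  ae_eventually_mem := by
    have hcoord : ∀ i, ∀ᵐ x ∂Measure.pi μ, ∀ᶠ j in l, x i ∈ s i j := fun i =>
      Measure.tendsto_eval_ae_ae.eventually (hs i).ae_eventually_mem
    filter_upwards [ae_all_iff.2 hcoord] with x hx
    simpa only [Set.mem_univ_pi, eventually_all] using hx
  measurableSet j := .univ_pi fun i => (hs i).measurableSet j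

theorem lintegral_le_of_aecover {α ι : Type*} [MeasurableSpace α] {μ : Measure α} {l : Filter ι}
    [l.NeBot] [l.IsCountablyGenerated] {s : ι → Set α} (hs : AECover μ l s) {f : α → ENNReal}
    (hf : AEMeasurable f μ) {B : ENNReal} (hB : ∀ i, ∫⁻ x in s i, f x ∂μ ≤ B) :
    ∫⁻ x, f x ∂μ ≤ B :=
  le_of_tendsto (hs.lintegral_tendsto_of_countably_generated hf) (.of_forall hB)

namespace CF

open PowerSeries (coeff)

variable {E : Type} [MeasurableSpace E] {ν : Measure E}

theorem isIntegrable_of_lintegral_le {Φ : CF E} (hΦ : ∀ n, Measurable (Φ n)) {b : ℕ → ℝ}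
    (hb : ∀ n ≠ 0, ∫⁻ x, ENNReal.ofReal |Φ n x| ∂(Measure.pi fun _ => ν) ≤ ENNReal.ofReal (b n)) :
    IsIntegrable ν Φ := fun n => by
  obtain rfl | hn := eq_or_ne n 0
  · rw [Measure.pi_of_empty]
    exact .of_finite
  · refine ⟨(hΦ n).aestronglyMeasurable, ?_⟩
    rw [hasFiniteIntegral_iff_norm]
    exact (hb n hn).trans_lt ENNReal.ofReal_lt_top

theorem coeff_genSeries_abs_le_of_lintegral_le {z : ℝ} (hz : 0 ≤ z) {Φ : CF E} {n : ℕ}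
    (hΦ : Measurable (Φ n)) {b : ℝ} (hb₀ : 0 ≤ b)
    (hb : ∫⁻ x, ENNReal.ofReal |Φ n x| ∂(Measure.pi fun _ => ν) ≤ ENNReal.ofReal b) :
    coeff n (genSeries ν z |Φ|) ≤ z ^ n / n.factorial * b := by
  rw [coeff_genSeries]
  gcongr
  refine (integral_eq_lintegral_of_nonneg_ae (.of_forall fun x => abs_nonneg (Φ n x))
    hΦ.abs.aestronglyMeasurable).trans_le ?_
  exact ENNReal.toReal_le_of_le_ofReal hb₀ hb

theorem isIntegrable_of_abs_le [IsFiniteMeasure ν] {Φ : CF E} (hΦ : ∀ n, Measurable (Φ n))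
    {b : ℕ → ℝ} (hb : ∀ n x, |Φ n x| ≤ b n) : IsIntegrable ν Φ := fun n =>
  .of_bound (hΦ n).aestronglyMeasurable (b n) (.of_forall (hb n))

theorem summable_norm_coeff_genSeries_of_abs_le_pow [IsFiniteMeasure ν] (z : ℝ) {Φ : CF E} {ξ : ℝ}
    (hξ : ∀ n x, |Φ n x| ≤ ξ ^ n) : Summable fun n => ‖coeff n (genSeries ν z Φ)‖ := by
  refine .of_nonneg_of_le (fun _ => norm_nonneg _) (fun n => ?_)
    (Real.summable_pow_div_factorial (|z| * (ξ * ν.real Set.univ)))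
  have hint : ‖∫ x, Φ n x ∂(Measure.pi fun _ => ν)‖ ≤ (ξ * ν.real Set.univ) ^ n := by
    refine (norm_integral_le_of_norm_le_const (.of_forall (hξ n))).trans_eq ?_
    simp [Measure.real, Measure.pi_univ, mul_pow]
  rw [coeff_genSeries, norm_mul, norm_div, norm_pow, Real.norm_natCast, Real.norm_eq_abs, mul_pow,
    mul_div_right_comm]
  gcongr

theorem isIntegrable_of_smul {r : ℝ} (hr : r ≠ 0) {Φ : CF E} (h : IsIntegrable ν (r • Φ)) :
    IsIntegrable ν Φ := by
  simpa only [smul_smul, inv_mul_cancel₀ hr, one_smul] using h.smul r⁻¹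

theorem coeff_genSeries_abs_starExp_le {C δ r : ℝ} (hC : 0 ≤ C) (hδ : 0 ≤ δ) (hr : 0 < r)
    {ω : CF E} {n : ℕ} (hmeas : Measurable ((r • starExp ω) n))
    (hbound : ∫⁻ y, ENNReal.ofReal |(r • starExp ω) n y| ∂(Measure.pi fun _ => ν) ≤
      ENNReal.ofReal (n.factorial * C * δ ^ n * r)) :
    coeff n (genSeries ν 1 |starExp ω|) ≤ C * δ ^ n := by
  have habs : |r • starExp ω| = r • |starExp ω| := by
    funext n y
    exact (abs_mul _ _).trans (congrArg (· * |starExp ω n y|) (abs_of_pos hr))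
  have hle := coeff_genSeries_abs_le_of_lintegral_le zero_le_one hmeas (by positivity) hbound
  rw [habs, genSeries_smul, PowerSeries.coeff_smul, smul_eq_mul, one_pow] at hle
  refine le_of_mul_le_mul_left (hle.trans_eq ?_) hr
  field_simp

section SigmaFinite

variable [SigmaFinite ν]

theorem IsIntegrable.restrict {Φ : CF E} (hΦ : IsIntegrable ν Φ) (s : Set E) :
    IsIntegrable (ν.restrict s) Φ := fun n => by
  rw [← Measure.restrict_pi_pi]
  exact (hΦ n).restrict

theorem abs_coeff_genSeries_restrict_le (z : ℝ) {Φ : CF E} (hΦ : IsIntegrable ν Φ) (s : Set E)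
    (n : ℕ) :
    |coeff n (genSeries (ν.restrict s) z Φ)| ≤ coeff n (genSeries ν |z| |Φ|) := by
  rw [coeff_genSeries, coeff_genSeries, abs_mul, abs_div, abs_pow, Nat.abs_cast,
    ← Measure.restrict_pi_pi]
  gcongr
  exact abs_integral_le_integral_abs.trans <|
    setIntegral_le_integral (hΦ n).abs (.of_forall fun x => abs_nonneg (Φ n x))

variable {ι : Type*} {l : Filter ι} [l.IsCountablyGenerated] {Λ : ι → Set E}

theorem tendsto_coeff_genSeries_restrict (hΛ : AECover ν l Λ) (z : ℝ) {Φ : CF E}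
    (hΦ : IsIntegrable ν Φ) (n : ℕ) :
    Tendsto (fun i => coeff n (genSeries (ν.restrict (Λ i)) z Φ)) l
      (𝓝 (coeff n (genSeries ν z Φ))) := by
  simp only [coeff_genSeries, ← Measure.restrict_pi_pi]
  exact ((aecover_univ_pi fun _ => hΛ).integral_tendsto_of_countably_generated (hΦ n)).const_mul _

theorem tendsto_tsum_coeff_genSeries_restrict (hΛ : AECover ν l Λ) (z : ℝ) {Φ : CF E}
    (hΦ : IsIntegrable ν Φ) (hsum : Summable fun n => coeff n (genSeries ν |z| |Φ|)) :
    Tendsto (fun i => ∑' n, coeff n (genSeries (ν.restrict (Λ i)) z Φ)) l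
      (𝓝 (∑' n, coeff n (genSeries ν z Φ))) :=
  tendsto_tsum_of_dominated_convergence hsum (tendsto_coeff_genSeries_restrict hΛ z hΦ)
    (.of_forall fun i => abs_coeff_genSeries_restrict_le z hΦ (Λ i))

variable [l.NeBot]

theorem lintegral_pi_le_of_aecover (hΛ : AECover ν l Λ) {n : ℕ} {f : (Fin n → E) → ENNReal}
    (hf : AEMeasurable f (Measure.pi fun _ => ν)) {B : ENNReal}
    (hB : ∀ i, ∫⁻ x, f x ∂(Measure.pi fun _ => ν.restrict (Λ i)) ≤ B) :
    ∫⁻ x, f x ∂(Measure.pi fun _ => ν) ≤ B := by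
  simp only [← Measure.restrict_pi_pi] at hB
  exact lintegral_le_of_aecover (aecover_univ_pi fun _ => hΛ) hf hB

end SigmaFinite

/-! ### Janossy densities -/

/-- The Janossy densities of the correlation functions `ρ` with respect to a reference measure
`ν`; `janossy d ρ Λ` is the case of Lebesgue measure restricted to `Λ`. -/
noncomputable def janossyDensity (ν : Measure E) (ρ : CF E) (n : ℕ) (x : Fin n → E) : ℝ :=
  ∑' k : ℕ, (-1 : ℝ) ^ k / k.factorial *
    ∫ y, ρ (n + k) (Fin.append x y) ∂(Measure.pi fun _ => ν)

theorem janossyDensity_zero (ρ : CF E) (x : Fin 0 → E) :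
    janossyDensity ν ρ 0 x = ∑' n, coeff n (genSeries ν (-1) ρ) := by
  simp only [janossyDensity, coeff_genSeries, Fin.append_left_nil x _ rfl, apply_comp_cast]

theorem janossyDensity_one (ρ : CF E) (x : E) :
    janossyDensity ν ρ 1 ![x] = ∑' n, coeff n (genSeries ν (-1) (D x ρ)) := by
  simp only [janossyDensity, coeff_genSeries, Fin.append_left_eq_cons, apply_comp_cast]
  rfl

theorem janossyDensity_one_eq_mul_exp [IsFiniteMeasure ν] {ρT ω : CF E} {ξ r : ℝ} {x : E}
    (hρT₀ : ρT 0 = 0) (hω₀ : ω 0 = 0) (hω : D x ρT = r • starExp ω)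
    (hmeas : ∀ n, Measurable (starExp ρT n)) (hξ : ∀ n y, |starExp ρT n y| ≤ ξ ^ n)
    (hint : IsIntegrable ν ω) (hsum : Summable fun n => ‖coeff n (genSeries ν (-1) ω)‖) :
    janossyDensity ν (starExp ρT) 1 ![x] =
      r * Real.exp (∑' n, coeff n (genSeries ν (-1) ω)) *
        janossyDensity ν (starExp ρT) 0 ![] := by
  have hω₀' := constantCoeff_genSeries (ν := ν) (-1) hω₀
  have hgen : genSeries ν (-1) (D x ρT) = r • (PowerSeries.exp ℝ).subst (genSeries ν (-1) ω) := by
    rw [hω, genSeries_smul, genSeries_starExp _ hω₀ hint]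
  have hsumD : Summable fun n => ‖coeff n (genSeries ν (-1) (D x ρT))‖ := by
    simp only [hgen, PowerSeries.coeff_smul, norm_smul]
    exact (summable_norm_coeff_exp_subst hω₀' hsum).mul_left _
  have htsumD : ∑' n, coeff n (genSeries ν (-1) (D x ρT)) =
      r * Real.exp (∑' n, coeff n (genSeries ν (-1) ω)) := by
    simp only [hgen, PowerSeries.coeff_smul, smul_eq_mul, tsum_mul_left,
      tsum_coeff_exp_subst hω₀' hsum]
  have hintD : IsIntegrable ν (D x ρT) := hω ▸ hint.starExp.smul r
  rw [janossyDensity_one, janossyDensity_zero, D_starExp x hρT₀,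
    genSeries_conv _ hintD (isIntegrable_of_abs_le hmeas hξ),
    tsum_coeff_mul hsumD (summable_norm_coeff_genSeries_of_abs_le_pow _ hξ), htsumD]

theorem eq_log_add_tsum_of_tendsto_janossyDensity_div [SigmaFinite ν] {ι : Type*} {l : Filter ι}
    [l.NeBot] [l.IsCountablyGenerated] {Λ : ι → Set E} (hΛ : AECover ν l Λ)
    (hfin : ∀ i, ν (Λ i) < ⊤) {μ ξ r : ℝ} (hr : 0 < r) {ρT ω : CF E} {x : E}
    (hρT₀ : ρT 0 = 0) (hω₀ : ω 0 = 0) (hω : D x ρT = r • starExp ω)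
    (hmeas : ∀ n, Measurable (starExp ρT n)) (hξ : ∀ n y, |starExp ρT n y| ≤ ξ ^ n)
    (hint : IsIntegrable ν ω) (hsum : Summable fun n => coeff n (genSeries ν 1 |ω|))
    (hlim : Tendsto (fun i => janossyDensity (ν.restrict (Λ i)) (starExp ρT) 1 ![x] /
      janossyDensity (ν.restrict (Λ i)) (starExp ρT) 0 ![]) l (𝓝 (Real.exp μ))) :
    μ = Real.log r + ∑' n, coeff n (genSeries ν (-1) ω) := by
  have hsum' : Summable fun n => coeff n (genSeries ν |-1| |ω|) := by
    rwa [abs_neg, abs_one]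
  have hlim' := ((tendsto_tsum_coeff_genSeries_restrict hΛ (-1) hint hsum').rexp).const_mul r
  -- the ratio is eventually positive, so the denominator is not the junk case `j⁰ = 0`
  have hratio : (fun i => janossyDensity (ν.restrict (Λ i)) (starExp ρT) 1 ![x] /
      janossyDensity (ν.restrict (Λ i)) (starExp ρT) 0 ![]) =ᶠ[l]
      fun i => r * Real.exp (∑' n, coeff n (genSeries (ν.restrict (Λ i)) (-1) ω)) := by
    filter_upwards [hlim.eventually_ne (Real.exp_pos μ).ne'] with i hi
    have : IsFiniteMeasure (ν.restrict (Λ i)) := isFiniteMeasure_restrict.2 (hfin i).ne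
    rw [janossyDensity_one_eq_mul_exp hρT₀ hω₀ hω hmeas hξ (hint.restrict _)
      (.of_nonneg_of_le (fun _ => norm_nonneg _) (abs_coeff_genSeries_restrict_le _ hint _) hsum')]
    exact mul_div_cancel_right₀ _ (div_ne_zero_iff.1 hi).2
  have hexp := tendsto_nhds_unique (hlim.congr' hratio) hlim'
  rw [← Real.log_exp μ, hexp, Real.log_mul hr.ne' (Real.exp_pos _).ne', Real.log_exp]

end CF

open CF in
theorem chemical_potential_expansion_general {E : Type} [MeasurableSpace E] {ν : Measure E}
    [SigmaFinite ν] {ι : Type*} {l : Filter ι} [l.NeBot] [l.IsCountablyGenerated]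
    {Λ : ι → Set E} (hΛ : AECover ν l Λ) (hfin : ∀ i, ν (Λ i) < ⊤) {C δ μ ξ r : ℝ}
    (hC : 0 ≤ C) (hδ : 0 ≤ δ) (hsmall : δ * (1 + 2 * C) < 1) (hr : 0 < r) {ρ ρT ω : CF E} {x : E}
    (hmeas : ∀ n, Measurable (ρ n)) (hξ : ∀ n y, |ρ n y| ≤ ξ ^ n)
    (hρT₀ : ρT 0 = 0) (hρT : starExp ρT = ρ) (hω₀ : ω 0 = 0) (hω : D x ρT = r • starExp ω)
    (hlim : Tendsto (fun i => janossyDensity (ν.restrict (Λ i)) ρ 1 ![x] /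
      janossyDensity (ν.restrict (Λ i)) ρ 0 ![]) l (𝓝 (Real.exp μ)))
    (hbound : ∀ i, ∀ k ≠ 0, ∫⁻ y, ENNReal.ofReal |ρT (k + 1) (Fin.cons x y)|
      ∂(Measure.pi fun _ => ν.restrict (Λ i)) ≤ ENNReal.ofReal (k.factorial * C * δ ^ k * r)) :
    (∀ k, Integrable (ω k) (Measure.pi fun _ => ν)) ∧
      Summable (fun k : ℕ =>
        |(-1 : ℝ) ^ k / k.factorial * ∫ y, ω k y ∂(Measure.pi fun _ => ν)|) ∧
      μ = Real.log r +
        ∑' k : ℕ, (-1 : ℝ) ^ k / k.factorial * ∫ y, ω k y ∂(Measure.pi fun _ => ν) := by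
  subst hρT
  have hmeasD : ∀ n, Measurable ((r • starExp ω) n) :=
    hω ▸ measurable_D x (measurable_of_measurable_starExp hρT₀ hmeas)
  have hboundD : ∀ n ≠ 0, ∫⁻ y, ENNReal.ofReal |(r • starExp ω) n y| ∂(Measure.pi fun _ => ν) ≤
      ENNReal.ofReal (n.factorial * C * δ ^ n * r) := fun n hn =>
    lintegral_pi_le_of_aecover hΛ (hmeasD n).abs.ennreal_ofReal.aemeasurable
      fun i => hω ▸ hbound i n hn
  have hintE : IsIntegrable ν (starExp ω) :=
    isIntegrable_of_smul hr.ne' (isIntegrable_of_lintegral_le hmeasD hboundD)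
  have hint : IsIntegrable ν ω := .of_starExp hω₀ hintE
  have hgeom : ∀ n, PowerSeries.coeff n (genSeries ν 1 |ω|) ≤ (δ * (1 + 2 * C)) ^ n :=
    coeff_genSeries_abs_le_pow zero_le_one hC hδ hω₀ hintE
      fun n hn => coeff_genSeries_abs_starExp_le hC hδ hr (hmeasD n) (hboundD n hn)
  have hsum : Summable fun n => PowerSeries.coeff n (genSeries ν 1 |ω|) :=
    .of_nonneg_of_le (coeff_genSeries_abs_nonneg zero_le_one ω) hgeom
      (summable_geometric_of_lt_one (by positivity) hsmall)
  simp only [← coeff_genSeries]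
  refine ⟨hint, .of_nonneg_of_le (fun _ => abs_nonneg _) (fun n => ?_) hsum,
    eq_log_add_tsum_of_tendsto_janossyDensity_div hΛ hfin hr hρT₀ hω₀ hω hmeas hξ hint hsum hlim⟩
  simpa using abs_coeff_genSeries_restrict_le (-1) hint Set.univ n

open CF MeasureTheory in
/-- Theorem 3.1, expansion of the chemical potential. -/
theorem chemical_potential_expansion (d : ℕ) (hd : 1 ≤ d)
    (M A : ℝ) (hM : 0 < M) (hA : 0 < A) :
    ∃ D₀ > (0 : ℝ),
      ∀ (Dρ μ ξ r : ℝ) (ρ ρT ω0 : CF (Euc d)),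
        0 < Dρ → Dρ ≤ D₀ → 0 < ξ → 0 < r →
        ρ 0 = 1 → IsSymm ρ → (∀ n, Measurable (ρ n)) →
        (∀ n x, 0 ≤ ρ n x) →
        -- Ruelle bound
        (∀ (n : ℕ) (x : Fin n → Euc d), ρ n x ≤ ξ ^ n) →
        -- translation invariance
        (∀ (n : ℕ) (a : Euc d) (x : Fin n → Euc d), ρ n (fun i => x i + a) = ρ n x) →
        -- constant density
        (∀ x : Euc d, ρ 1 ![x] = r) →
        ρT 0 = 0 → IsSymm ρT → starExp ρT = ρ →
        ω0 0 = 0 → IsSymm ω0 → D (0 : Euc d) ρT = r • starExp ω0 →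
        -- Assumption A for n = 1
        (∀ Δ : Set (Euc d), Bornology.IsBounded Δ →
          ∀ ε > (0 : ℝ), ∃ R₀ : ℝ, ∀ R ≥ R₀, ∀ x ∈ Δ,
            |janossy d ρ (Metric.ball 0 R) 1 ![x] /
                janossy d ρ (Metric.ball 0 R) 0 ![] - Real.exp μ| ≤ ε) →
        -- Assumption B for m = 1
        (∀ Λ : Set (Euc d), Bornology.IsBounded Λ → MeasurableSet Λ →
          ∀ (k : ℕ), 1 ≤ k → ∀ x : Euc d,
            ∫⁻ y, ENNReal.ofReal |ρT (k + 1) (Fin.cons x y)| ∂(piRestrict d Λ k) ≤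
              ENNReal.ofReal (k.factorial * M * A * Dρ ^ k * r)) →
        Summable (fun k : ℕ =>
          |(-1 : ℝ) ^ k / k.factorial * ∫ y, ω0 k y ∂(piVol d k)|) ∧
        μ = Real.log r +
          ∑' k : ℕ, (-1 : ℝ) ^ k / k.factorial * ∫ y, ω0 k y ∂(piVol d k) := by
  refine ⟨1 / (2 * (1 + 2 * (M * A))), by positivity, ?_⟩
  rintro Dρ μ ξ r ρ ρT ω0 hDρ hDρ_le - hr - - hmeas hnonneg hRuelle - - hρT₀ - hρT hω₀ - hω hA' hB
  have hsmall : Dρ * (1 + 2 * (M * A)) < 1 := by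
    rw [le_div_iff₀ (by positivity)] at hDρ_le
    linarith
  have hlim : Tendsto (fun R : ℝ => janossy d ρ (Metric.ball 0 R) 1 ![0] /
      janossy d ρ (Metric.ball 0 R) 0 ![]) atTop (𝓝 (Real.exp μ)) :=
    Metric.nhds_basis_closedBall.tendsto_right_iff.2 fun ε hε =>
      let ⟨R₀, hR₀⟩ := hA' {0} Bornology.isBounded_singleton ε hε
      eventually_atTop.2 ⟨R₀, fun R hR => hR₀ R hR 0 rfl⟩
  refine (chemical_potential_expansion_general (aecover_ball tendsto_id)
    (fun _ => measure_ball_lt_top) (by positivity) hDρ.le hsmall hr hmeas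
    (fun n y => (abs_of_nonneg (hnonneg n y)).trans_le (hRuelle n y)) hρT₀ hρT hω₀ hω hlim
    fun R k hk => ?_).2
  rw [← mul_assoc]
  exact hB _ Metric.isBounded_ball measurableSet_ball k (Nat.one_le_iff_ne_zero.2 hk) 0
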